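/- (Gap creation for MDP.) Let F_q be a finite field with q elements, let Q_1, …, Q_m ∈ F_q^{n×n} be coefficient matrices, let ε = 1/(9q), let d ≥ 1, and let C ∈ F_q^{N×n} be a generator matrix of an ε-balanced code of minimum distance d. Define the subspace V = {C X Cᵀ : X ∈ F_q^{n×n}, X = Xᵀ, Q_ℓ(X) = 0 for all ℓ ∈ [m]} of F_q^{N×N}. Then: if there exists a nonzero x ∈ F_q^n with Q_ℓ(x xᵀ) = 0 for all ℓ, then V contains a nonzero element of Hamming weight at most (1 + 1/(3q)) · d²; and if no such x exists, then every nonzero element of V has Hamming weight at least (1 + 1/q) · d². -/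

import Mathlib

/-!
YES case: for a common zero `x`, the matrix `C (x xᵀ) Cᵀ = (Cx)(Cx)ᵀ` has weight `wt(Cx)²`, which is
at most `(1 + 1/(9q))² d² ≤ (1 + 1/(3q)) d²`.

NO case: a symmetric matrix whose columns are all multiples of one column `v` has the form `a • v vᵀ`
(`eq_smul_vecMulVec_of_isSymm`), so it would yield a common zero `v`. Hence `X` has two linearly
independent columns `u, v`, and `Cu, Cv` span a two-dimensional subcode. Its `q + 1` projective
points are the codewords `Cv` and `C(u + c v)`, each of weight at least `d`, while every coordinate
of the union `S` of their supports is nonzero in exactly `q` of them (`sum_hammingWt_add_smul`); so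
`q |S| ≥ (q + 1) d`. For `i ∈ S` the `i`-th row of `CX` is nonzero, so the `i`-th row of `C X Cᵀ` is
a nonzero codeword, of weight at least `d`. Thus the total weight is at least `|S| d ≥ (1 + 1/q) d²`.
-/

open Matrix

/-- Hamming weight of a vector: the number of nonzero coordinates. -/
noncomputable def hammingWt {ι : Type*} [Fintype ι] {F : Type*} [Zero F] (x : ι → F) : ℕ :=
  Set.ncard {i | x i ≠ 0}

/-- Hamming weight of a matrix: the number of nonzero entries. -/
noncomputable def matWt {η κ : Type*} {F : Type*} [Zero F] (M : Matrix η κ F) : ℕ :=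
  Set.ncard {p : η × κ | M p.1 p.2 ≠ 0}

/-- `C` is a generator matrix of an `ε`-balanced code of minimum distance `d`:
`x ↦ Cx` is injective and every nonzero codeword `Cx` has Hamming weight in `[d, (1+ε)d]`. -/
def IsBalancedGen {F : Type*} [Field F] {N n : ℕ} (ε : ℝ) (d : ℕ)
    (C : Matrix (Fin N) (Fin n) F) : Prop :=
  Function.Injective C.mulVec ∧
  ∀ x : Fin n → F, x ≠ 0 →
    (d : ℝ) ≤ (hammingWt (C.mulVec x) : ℝ) ∧
    (hammingWt (C.mulVec x) : ℝ) ≤ (1 + ε) * d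

/-- Evaluation of the coefficient matrix `Q` at the matrix `X`:
`Q(X) = Σ_{i,j} Q[i,j] ⬝ X[i,j]`. -/
def quadEval {F : Type*} [Field F] {n : ℕ} (Q X : Matrix (Fin n) (Fin n) F) : F :=
  ∑ i, ∑ j, Q i j * X i j

open Classical in
lemma hammingWt_eq_sum {ι : Type*} [Fintype ι] {F : Type*} [Zero F] (x : ι → F) :
    hammingWt x = ∑ i, if x i ≠ 0 then 1 else 0 := by
  unfold hammingWt
  rw [Set.ncard_eq_toFinset_card', Finset.sum_boole]
  simp

open Classical in
lemma matWt_eq_sum {η κ : Type*} [Fintype η] [Fintype κ] {F : Type*} [Zero F]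
    (M : Matrix η κ F) : matWt M = ∑ i, hammingWt (M i) := by
  unfold matWt
  simp_rw [hammingWt_eq_sum]
  rw [Set.ncard_eq_toFinset_card', ← Fintype.sum_prod_type', Finset.sum_boole]
  simp

lemma matWt_vecMulVec {η κ : Type*} [Fintype η] [Fintype κ] {F : Type*} [Field F]
    (x : η → F) (y : κ → F) : matWt (vecMulVec x y) = hammingWt x * hammingWt y := by
  unfold matWt hammingWt
  rw [← Set.ncard_prod]
  congr 1
  ext p
  simp [vecMulVec_apply]

open Classical in
/-- Double count over the projective line spanned by `u` and `v`: each coordinate where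
`u` or `v` is nonzero vanishes on exactly one of the `q + 1` points. -/
lemma sum_hammingWt_add_smul {ι : Type*} [Fintype ι] {F : Type*} [Field F] [Fintype F]
    (u v : ι → F) :
    (∑ c : F, hammingWt (u + c • v)) + hammingWt v
      = Fintype.card F * (Finset.univ.filter fun i => u i ≠ 0 ∨ v i ≠ 0).card := by
  simp_rw [hammingWt_eq_sum]
  rw [Finset.sum_comm, ← Finset.sum_add_distrib, Finset.card_filter, Finset.mul_sum]
  refine Finset.sum_congr rfl fun i _ => ?_
  by_cases hv : v i = 0
  · by_cases hu : u i = 0 <;> simp [hu, hv]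
  · have h : ∀ c : F, ((u + c • v) i ≠ 0) ↔ c ≠ -u i / v i := by
      intro c
      rw [not_iff_not, eq_div_iff hv, eq_neg_iff_add_eq_zero, add_comm]
      simp
    simp_rw [h]
    rw [Finset.sum_boole, Finset.filter_ne']
    have := Fintype.card_pos (α := F)
    simp [hv, Finset.card_erase_of_mem]
    omega

lemma eq_smul_vecMulVec_of_isSymm {F : Type*} [Field F] {n : ℕ}
    (X : Matrix (Fin n) (Fin n) F) (hX : X.IsSymm) (v w : Fin n → F) (hv : v ≠ 0)
    (h : ∀ i l, X i l = v i * w l) : ∃ a : F, X = a • vecMulVec v v := by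
  obtain ⟨k, hk⟩ := Function.ne_iff.mp hv
  have hk : v k ≠ 0 := hk
  refine ⟨w k / v k, ?_⟩
  ext i l
  have h1 := hX.apply k l
  rw [h, h] at h1
  rw [h, Matrix.smul_apply, vecMulVec_apply, smul_eq_mul]
  field_simp
  linear_combination -v i * h1

/-- Gap creation for MDP with `ε = 1/(9q)`: in the YES case `V` contains a nonzero element
of Hamming weight at most `(1 + 1/(3q)) d²`, and in the NO case every nonzero element of
`V` has Hamming weight at least `(1 + 1/q) d²`. -/
theorem mdp_gap_creation {F : Type*} [Field F] [Fintype F] {N n m : ℕ}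
    (Q : Fin m → Matrix (Fin n) (Fin n) F)
    (d : ℕ) (hd : 1 ≤ d)
    (C : Matrix (Fin N) (Fin n) F)
    (hC : IsBalancedGen (1 / (9 * (Fintype.card F : ℝ))) d C) :
    ((∃ x : Fin n → F, x ≠ 0 ∧ ∀ ℓ, quadEval (Q ℓ) (vecMulVec x x) = 0) →
      ∃ Y : Matrix (Fin N) (Fin N) F,
        (∃ X : Matrix (Fin n) (Fin n) F,
          X.IsSymm ∧ (∀ ℓ, quadEval (Q ℓ) X = 0) ∧ Y = C * X * Cᵀ) ∧
        Y ≠ 0 ∧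
        (matWt Y : ℝ) ≤ (1 + 1 / (3 * (Fintype.card F : ℝ))) * (d : ℝ) ^ 2) ∧
    ((¬ ∃ x : Fin n → F, x ≠ 0 ∧ ∀ ℓ, quadEval (Q ℓ) (vecMulVec x x) = 0) →
      ∀ Y : Matrix (Fin N) (Fin N) F,
        (∃ X : Matrix (Fin n) (Fin n) F,
          X.IsSymm ∧ (∀ ℓ, quadEval (Q ℓ) X = 0) ∧ Y = C * X * Cᵀ) →
        Y ≠ 0 →
        (1 + 1 / (Fintype.card F : ℝ)) * (d : ℝ) ^ 2 ≤ (matWt Y : ℝ)) := by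
  obtain ⟨-, hC⟩ := hC
  have hq : (0 : ℝ) < Fintype.card F := by exact_mod_cast Fintype.card_pos
  have hd0 : (0 : ℝ) < d := by exact_mod_cast hd
  refine ⟨?_, ?_⟩
  · rintro ⟨x, hx, hQ⟩
    obtain ⟨hlo, hhi⟩ := hC x hx
    have hY : C * vecMulVec x x * Cᵀ = vecMulVec (C *ᵥ x) (C *ᵥ x) := by
      rw [mul_vecMulVec, vecMulVec_mul, vecMul_transpose]
    refine ⟨_, ⟨vecMulVec x x, ?_, hQ, rfl⟩, ?_, ?_⟩
    · exact transpose_vecMulVec x x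
    · rw [hY]
      intro h0
      have h1 := matWt_vecMulVec (C *ᵥ x) (C *ᵥ x)
      have h2 : (0 : ℝ) < hammingWt (C *ᵥ x) := hd0.trans_le hlo
      have h3 : 0 < hammingWt (C *ᵥ x) := by exact_mod_cast h2
      rw [h0] at h1
      have h4 : matWt (0 : Matrix (Fin N) (Fin N) F) = 0 := by simp [matWt]
      have := Nat.mul_pos h3 h3
      omega
    · rw [hY, matWt_vecMulVec]
      push_cast
      have h1 : (1 : ℝ) ≤ Fintype.card F := by exact_mod_cast Fintype.card_pos (α := F)
      have h2 := mul_self_le_mul_self (Nat.cast_nonneg _) hhi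
      refine h2.trans ?_
      obtain ⟨t, ht⟩ : ∃ t : ℝ, t = 1 / (9 * (Fintype.card F : ℝ)) := ⟨_, rfl⟩
      have ht3 : 1 / (3 * (Fintype.card F : ℝ)) = 3 * t := by
        rw [ht]; field_simp; norm_num
      have ht0 : 0 ≤ t := by rw [ht]; positivity
      have ht1 : t ≤ 1 := by
        rw [ht, div_le_one (by positivity)]; linarith
      rw [ht3, ← ht]
      have h3 : (1 + t) ^ 2 ≤ 1 + 3 * t := by nlinarith
      calc (1 + t) * d * ((1 + t) * d) = (1 + t) ^ 2 * (d : ℝ) ^ 2 := by ring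
        _ ≤ (1 + 3 * t) * (d : ℝ) ^ 2 := by gcongr
  · rintro hno Y ⟨X, hX, hQ, rfl⟩ hY
    have hX0 : X ≠ 0 := by
      rintro rfl
      simp at hY
    obtain ⟨k, hk⟩ : ∃ k, X.col k ≠ 0 := by
      by_contra! h
      exact hX0 (Matrix.ext fun i j => congrFun (h j) i)
    obtain ⟨l, hl⟩ : ∃ l, ∀ c : F, X.col l + c • X.col k ≠ 0 := by
      by_contra! h
      choose w hw using h
      obtain ⟨a, ha⟩ := eq_smul_vecMulVec_of_isSymm X hX (X.col k) (fun l => -w l) hk (by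
        intro i l
        have := congrFun (hw l) i
        simp only [Pi.add_apply, Pi.smul_apply, col_apply, Pi.zero_apply, smul_eq_mul] at this
        rw [col_apply]
        linear_combination this)
      have ha0 : a ≠ 0 := by
        rintro rfl
        exact hX0 (by rw [ha, zero_smul])
      refine hno ⟨X.col k, hk, fun ℓ => ?_⟩
      have h1 : quadEval (Q ℓ) (a • vecMulVec (X.col k) (X.col k)) = 0 := by
        rw [← ha]; exact hQ ℓ
      have h2 : ∀ M : Matrix (Fin n) (Fin n) F,
          quadEval (Q ℓ) (a • M) = a * quadEval (Q ℓ) M := by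
        intro M
        simp only [quadEval, Finset.mul_sum, Matrix.smul_apply, smul_eq_mul]
        exact Finset.sum_congr rfl fun i _ => Finset.sum_congr rfl fun j _ => by ring
      rw [h2] at h1
      exact (mul_eq_zero.mp h1).resolve_left ha0
    classical
    have hmin : ∀ x : Fin n → F, x ≠ 0 → d ≤ hammingWt (C *ᵥ x) := fun x hx => by
      exact_mod_cast (hC x hx).1
    set S := Finset.univ.filter fun i => (C *ᵥ X.col l) i ≠ 0 ∨ (C *ᵥ X.col k) i ≠ 0 with hS
    have hcard : (Fintype.card F + 1) * d ≤ Fintype.card F * S.card := by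
      rw [hS, ← sum_hammingWt_add_smul, add_mul, one_mul]
      refine add_le_add ?_ (hmin _ hk)
      rw [← smul_eq_mul, ← Finset.card_univ, ← Finset.sum_const]
      refine Finset.sum_le_sum fun c _ => ?_
      rw [← mulVec_smul, ← mulVec_add]
      exact hmin _ (hl c)
    have hrow : ∀ i, (C * X * Cᵀ) i = C *ᵥ ((C * X) i) := by
      intro i
      rw [mul_apply_eq_vecMul, vecMul_transpose]
    have hwt : S.card * d ≤ matWt (C * X * Cᵀ) := by
      rw [matWt_eq_sum, ← smul_eq_mul, ← Finset.sum_const]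
      refine (Finset.sum_le_sum fun i hi => ?_).trans
        (Finset.sum_le_sum_of_subset (Finset.subset_univ S))
      rw [hrow]
      refine hmin _ fun h0 => ?_
      have hz : ∀ j, (C *ᵥ X.col j) i = 0 := fun j => congrFun h0 j
      simp [hS, hz] at hi
    have h1 : ((Fintype.card F : ℝ) + 1) * d ≤ Fintype.card F * S.card := by exact_mod_cast hcard
    have h2 : (S.card : ℝ) * d ≤ matWt (C * X * Cᵀ) := by exact_mod_cast hwt
    refine le_trans ?_ h2
    have h3 : (1 + 1 / (Fintype.card F : ℝ)) * d ≤ S.card := by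
      rw [← mul_le_mul_iff_right₀ hq]
      refine le_trans (le_of_eq ?_) h1
      field_simp
    calc (1 + 1 / (Fintype.card F : ℝ)) * (d : ℝ) ^ 2
        = (1 + 1 / (Fintype.card F : ℝ)) * d * d := by ring
      _ ≤ S.card * d := by gcongr
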